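/- Let M ∈ K^{p×p} be invertible. Then the tensor rank of the tensor-tensor multiplication TM_{⟨m,n,s⟩,p} : K^{m×n×p} × K^{n×s×p} → K^{m×s×p}, (A,B) ↦ A *_M B, satisfies R(TM_{⟨m,n,s⟩,p}) ≥ max{mnp, nsp, msp}. -/

import Mathlib

open Matrix

/-- Mode-3 product of a third-order tensor (stack of `p` frontal slices)
with a matrix `M ∈ K^{q×p}`: `(A ×₃ M)ₖ = Σ_l M k l • A l`. -/
def mode3 {K : Type*} [Semiring K] {m n p q : ℕ} (M : Matrix (Fin q) (Fin p) K)
    (A : Fin p → Matrix (Fin m) (Fin n) K) : Fin q → Matrix (Fin m) (Fin n) K :=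
  fun k => ∑ l, M k l • A l

/-- Face-wise product of two third-order tensors. -/
def facewise {K : Type*} [Semiring K] {m n s p : ℕ}
    (A : Fin p → Matrix (Fin m) (Fin n) K) (B : Fin p → Matrix (Fin n) (Fin s) K) :
    Fin p → Matrix (Fin m) (Fin s) K :=
  fun i => A i * B i

/-- Tensor-tensor multiplication `A *_M B = ((A ×₃ M) △ (B ×₃ M)) ×₃ M⁺`. -/
def tmul3 {K : Type*} [Semiring K] {m n s p q : ℕ} (M : Matrix (Fin q) (Fin p) K)
    (Mp : Matrix (Fin p) (Fin q) K)
    (A : Fin p → Matrix (Fin m) (Fin n) K) (B : Fin p → Matrix (Fin n) (Fin s) K) :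
    Fin p → Matrix (Fin m) (Fin s) K :=
  mode3 Mp (facewise (mode3 M A) (mode3 M B))

/-- Tensor rank (bilinear complexity) of a bilinear map `T : U × V → W`. -/
noncomputable def tensorRank (K : Type*) [Field K] {U V W : Type*}
    [AddCommGroup U] [Module K U] [AddCommGroup V] [Module K V]
    [AddCommGroup W] [Module K W] (T : U → V → W) : ℕ :=
  sInf {r : ℕ | ∃ (α : Fin r → U →ₗ[K] K) (β : Fin r → V →ₗ[K] K) (w : Fin r → W),
    ∀ u v, T u v = ∑ i, (α i u * β i v) • w i}

section TensorRank

variable {K : Type*} [Field K] {U V W : Type*} [AddCommGroup U] [Module K U]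
  [AddCommGroup V] [Module K V] [AddCommGroup W] [Module K W]

/-- A bilinear map on finite-dimensional spaces has a finite rank decomposition. -/
lemma exists_rank_decomposition [FiniteDimensional K U] [FiniteDimensional K V]
    (T : U →ₗ[K] V →ₗ[K] W) :
    ∃ (r : ℕ) (α : Fin r → U →ₗ[K] K) (β : Fin r → V →ₗ[K] K) (w : Fin r → W),
      ∀ u v, T u v = ∑ i, (α i u * β i v) • w i := by
  let b := Module.finBasis K U
  let c := Module.finBasis K V
  refine ⟨_, fun i => b.coord (finProdFinEquiv.symm i).1,
    fun i => c.coord (finProdFinEquiv.symm i).2,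
    fun i => T (b (finProdFinEquiv.symm i).1) (c (finProdFinEquiv.symm i).2), fun u v => ?_⟩
  rw [Equiv.sum_comp finProdFinEquiv.symm
    (fun x => (b.coord x.1 u * c.coord x.2 v) • T (b x.1) (c x.2)), Fintype.sum_prod_type]
  conv_lhs => rw [← b.sum_repr u, ← c.sum_repr v]
  simp only [map_sum, map_smul, LinearMap.sum_apply, LinearMap.smul_apply, Finset.smul_sum,
    smul_smul, Module.Basis.coord_apply]
  rw [Finset.sum_comm]
  simp only [mul_comm]

lemma finrank_le_of_left_nondegenerate {r : ℕ} {T : U → V → W} {α : Fin r → U →ₗ[K] K}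
    {β : Fin r → V →ₗ[K] K} {w : Fin r → W} (h : ∀ u v, T u v = ∑ i, (α i u * β i v) • w i)
    (hT : ∀ u, (∀ v, T u v = 0) → u = 0) : Module.finrank K U ≤ r := by
  have hinj : Function.Injective (LinearMap.pi α) := by
    rw [injective_iff_map_eq_zero]
    intro u hu
    refine hT u fun v => ?_
    have hα : ∀ i, α i u = 0 := fun i => congrFun hu i
    simp [h, hα]
  simpa using LinearMap.finrank_le_finrank_of_injective hinj

lemma finrank_le_of_right_nondegenerate {r : ℕ} {T : U → V → W} {α : Fin r → U →ₗ[K] K}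
    {β : Fin r → V →ₗ[K] K} {w : Fin r → W} (h : ∀ u v, T u v = ∑ i, (α i u * β i v) • w i)
    (hT : ∀ v, (∀ u, T u v = 0) → v = 0) : Module.finrank K V ≤ r :=
  finrank_le_of_left_nondegenerate (T := fun v u => T u v) (α := β) (β := α) (w := w)
    (fun v u => by simp only [h, mul_comm]) hT

lemma finrank_le_of_span_image_eq_top {r : ℕ} {T : U → V → W} {α : Fin r → U →ₗ[K] K}
    {β : Fin r → V →ₗ[K] K} {w : Fin r → W} (h : ∀ u v, T u v = ∑ i, (α i u * β i v) • w i)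
    (hT : Submodule.span K {x | ∃ u v, T u v = x} = ⊤) : Module.finrank K W ≤ r := by
  have hw : Submodule.span K (Set.range w) = ⊤ := by
    rw [eq_top_iff, ← hT, Submodule.span_le]
    rintro _ ⟨u, v, rfl⟩
    rw [h]
    exact Submodule.sum_mem _ fun i _ =>
      Submodule.smul_mem _ _ (Submodule.subset_span ⟨i, rfl⟩)
  simpa using finrank_le_of_span_eq_top hw

end TensorRank

section Mode3

variable {K : Type*} [Field K] {m n s p q : ℕ}

lemma mode3_add (M : Matrix (Fin q) (Fin p) K) (A B : Fin p → Matrix (Fin m) (Fin n) K) :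
    mode3 M (A + B) = mode3 M A + mode3 M B := by
  ext k : 1
  simp [mode3, Finset.sum_add_distrib]

lemma mode3_smul (M : Matrix (Fin q) (Fin p) K) (c : K) (A : Fin p → Matrix (Fin m) (Fin n) K) :
    mode3 M (c • A) = c • mode3 M A := by
  ext k : 1
  simp [mode3, Finset.smul_sum, smul_comm c]

/-- The mode-3 product with a fixed matrix, as a linear map. -/
def mode3Linear (M : Matrix (Fin q) (Fin p) K) :
    (Fin p → Matrix (Fin m) (Fin n) K) →ₗ[K] (Fin q → Matrix (Fin m) (Fin n) K) where
  toFun := mode3 M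
  map_add' := mode3_add M
  map_smul' := mode3_smul M

lemma mode3_mode3 {t : ℕ} (N : Matrix (Fin t) (Fin q) K) (M : Matrix (Fin q) (Fin p) K)
    (A : Fin p → Matrix (Fin m) (Fin n) K) : mode3 N (mode3 M A) = mode3 (N * M) A := by
  ext k : 1
  simp only [mode3, Finset.smul_sum, smul_smul, Matrix.mul_apply, Finset.sum_smul]
  exact Finset.sum_comm

lemma mode3_one (A : Fin p → Matrix (Fin m) (Fin n) K) : mode3 1 A = A := by
  ext k : 1
  simp [mode3, Matrix.one_apply, ite_smul]

/-- Tensor-tensor multiplication as a bilinear map. -/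
def tmul3Bilinear (M : Matrix (Fin q) (Fin p) K) (Mp : Matrix (Fin p) (Fin q) K) :
    (Fin p → Matrix (Fin m) (Fin n) K) →ₗ[K] (Fin p → Matrix (Fin n) (Fin s) K) →ₗ[K]
      (Fin p → Matrix (Fin m) (Fin s) K) :=
  LinearMap.mk₂ K (tmul3 M Mp)
    (fun A A' B => by
      rw [tmul3, tmul3, tmul3, ← mode3_add, mode3_add M]
      congr 1; ext k : 1; simp [facewise, Matrix.add_mul])
    (fun c A B => by
      rw [tmul3, tmul3, ← mode3_smul, mode3_smul M]
      congr 1; ext k : 1; simp [facewise])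
    (fun A B B' => by
      rw [tmul3, tmul3, tmul3, ← mode3_add, mode3_add M]
      congr 1; ext k : 1; simp [facewise, Matrix.mul_add])
    (fun c A B => by
      rw [tmul3, tmul3, ← mode3_smul, mode3_smul M]
      congr 1; ext k : 1; simp [facewise])

variable {M : Matrix (Fin p) (Fin p) K}

lemma mode3_mode3_inv (hM : IsUnit M.det) (A : Fin p → Matrix (Fin m) (Fin n) K) :
    mode3 M (mode3 M⁻¹ A) = A := by
  rw [mode3_mode3, Matrix.mul_nonsing_inv _ hM, mode3_one]

lemma mode3_inv_mode3 (hM : IsUnit M.det) (A : Fin p → Matrix (Fin m) (Fin n) K) :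
    mode3 M⁻¹ (mode3 M A) = A := by
  rw [mode3_mode3, Matrix.nonsing_inv_mul _ hM, mode3_one]

lemma mode3_eq_zero (hM : IsUnit M.det) {A : Fin p → Matrix (Fin m) (Fin n) K}
    (h : mode3 M A = 0) : A = 0 := by
  rw [← mode3_inv_mode3 hM A, h]
  exact map_zero (mode3Linear M⁻¹)

lemma facewise_mode3_eq_zero (hM : IsUnit M.det) {A : Fin p → Matrix (Fin m) (Fin n) K}
    {B : Fin p → Matrix (Fin n) (Fin s) K} (h : tmul3 M M⁻¹ A B = 0) :
    facewise (mode3 M A) (mode3 M B) = 0 :=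
  mode3_eq_zero (Matrix.isUnit_nonsing_inv_det M hM) h

lemma tmul3_left_nondegenerate (hs : 0 < s) (hM : IsUnit M.det)
    (A : Fin p → Matrix (Fin m) (Fin n) K)
    (h : ∀ B : Fin p → Matrix (Fin n) (Fin s) K, tmul3 M M⁻¹ A B = 0) : A = 0 := by
  refine mode3_eq_zero hM ?_
  ext k i j
  have hk := facewise_mode3_eq_zero hM (h (mode3 M⁻¹ fun _ => Matrix.single j ⟨0, hs⟩ 1))
  rw [mode3_mode3_inv hM] at hk
  simpa [facewise] using congrFun (congrFun (congrFun hk k) i) ⟨0, hs⟩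

lemma tmul3_right_nondegenerate (hm : 0 < m) (hM : IsUnit M.det)
    (B : Fin p → Matrix (Fin n) (Fin s) K)
    (h : ∀ A : Fin p → Matrix (Fin m) (Fin n) K, tmul3 M M⁻¹ A B = 0) : B = 0 := by
  refine mode3_eq_zero hM ?_
  ext k i j
  have hk := facewise_mode3_eq_zero hM (h (mode3 M⁻¹ fun _ => Matrix.single ⟨0, hm⟩ i 1))
  rw [mode3_mode3_inv hM] at hk
  simpa [facewise] using congrFun (congrFun (congrFun hk k) ⟨0, hm⟩) j

/-- Every stack of matrices is a sum of face-wise products, one for each row. -/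
lemma sum_facewise_single (hn : 0 < n) (C : Fin p → Matrix (Fin m) (Fin s) K) :
    ∑ a, facewise (fun _ => Matrix.single a (⟨0, hn⟩ : Fin n) (1 : K))
      (fun k => Matrix.of fun _ j => C k a j) = C := by
  ext k i j
  simp [facewise, Finset.sum_apply, Matrix.sum_apply, Matrix.mul_apply, Matrix.single_apply,
    ite_and]

lemma span_tmul3_eq_top (hn : 0 < n) (hM : IsUnit M.det) :
    Submodule.span K {C | ∃ (A : Fin p → Matrix (Fin m) (Fin n) K)
      (B : Fin p → Matrix (Fin n) (Fin s) K), tmul3 M M⁻¹ A B = C} = ⊤ := by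
  refine eq_top_iff.2 fun C _ => ?_
  have hC : C = mode3Linear M⁻¹ (mode3 M C) := (mode3_inv_mode3 hM C).symm
  rw [hC, ← sum_facewise_single hn (mode3 M C), map_sum]
  refine Submodule.sum_mem _ fun a _ => Submodule.subset_span
    ⟨mode3 M⁻¹ fun _ => Matrix.single a ⟨0, hn⟩ 1,
      mode3 M⁻¹ fun k => Matrix.of fun _ j => mode3 M C k a j, ?_⟩
  rw [tmul3, mode3_mode3_inv hM, mode3_mode3_inv hM]
  rfl

lemma finrank_tensor :
    Module.finrank K (Fin p → Matrix (Fin m) (Fin n) K) = m * n * p := by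
  simp [Module.finrank_pi_fintype, Module.finrank_matrix, mul_comm]

end Mode3

/-- for invertible `M ∈ K^{p×p}`, the tensor rank of the tensor-tensor
multiplication `TM_{⟨m,n,s⟩,p} : K^{m×n×p} × K^{n×s×p} → K^{m×s×p}` satisfies
`R(TM_{⟨m,n,s⟩,p}) ≥ max {mnp, nsp, msp}`. -/
theorem tensorRank_tmul3_ge_max {K : Type*} [RCLike K] {m n s p : ℕ}
    (hm : 0 < m) (hn : 0 < n) (hs : 0 < s)
    (M : Matrix (Fin p) (Fin p) K) (hM : IsUnit M.det) :
    max (m * n * p) (max (n * s * p) (m * s * p)) ≤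
      tensorRank K (fun (A : Fin p → Matrix (Fin m) (Fin n) K)
        (B : Fin p → Matrix (Fin n) (Fin s) K) => tmul3 M M⁻¹ A B) := by
  obtain ⟨α, β, w, h⟩ := Nat.sInf_mem (exists_rank_decomposition (tmul3Bilinear M M⁻¹))
  refine max_le ?_ (max_le ?_ ?_) <;> rw [← finrank_tensor (K := K)]
  · exact finrank_le_of_left_nondegenerate h (tmul3_left_nondegenerate hs hM)
  · exact finrank_le_of_right_nondegenerate h (tmul3_right_nondegenerate hm hM)
  · exact finrank_le_of_span_image_eq_top h (span_tmul3_eq_top hn hM)
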